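/- arXiv:2003.03656 — 2 statements merged into one kernel-verified Lean document; each statement's English description precedes it below -/
import Mathlib

section
/- There exists an absolute constant c > 0 such that for every δ > 0 there exists a constant C = C(δ) > 0 with the following property: for every prime power q and every integer k with 3 ≤ k ≤ q^{1/2}/(1+δ), one has binom(q², k) · exp(−C k³/q) ≤ A(q,k) ≤ binom(q², k) · exp(−c k³/q). -/
/-!
An arc `s` of size `j` is extended by exactly those points outside it that lie on none of its
`m = j.choose 2` secants. With `q = |F|`, each secant has `q - 2` points outside `s` and two of them
share at most one such point, so as long as `2 * m + 2 ≤ q` the secants cover a proportion between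
`m / (2 * q)` and `m / q` of the complement of `s`.

Counting pairs of an arc and a point extending it, the density of the `j`-element arcs among all
`j`-element sets is multiplied, on passing to `j + 1`, by the average proportion of points that
extend an arc. This factor lies between `exp (-2 * m / q)` and `exp (-m / (2 * q))`, and the
exponents add up because `∑ j < k, j.choose 2 = k.choose 3`, which is of order `k ^ 3`.
-/

open Finset MeasureTheory
open scoped NNReal ENNReal

/-- A set `P` in the affine plane over `F` is an arc if it contains no three
distinct collinear points. -/
def IsArc (F : Type*) [Field F] (P : Set (F × F)) : Prop :=
  ∀ a ∈ P, ∀ b ∈ P, ∀ c ∈ P,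
    a ≠ b → a ≠ c → b ≠ c → ¬ Collinear F ({a, b, c} : Set (F × F))

/-- `numArcs F k` is the number of `k`-element arcs in `F²`. -/
noncomputable def numArcs (F : Type*) [Field F] [Fintype F] (k : ℕ) : ℕ :=
  Nat.card {s : Finset (F × F) // s.card = k ∧ IsArc F ↑s}

/-- `maxArc F P` is the maximum cardinality of an arc contained in `P`. -/
noncomputable def maxArc (F : Type*) [Field F] (P : Finset (F × F)) : ℕ :=
  sSup {k : ℕ | ∃ s : Finset (F × F), s ⊆ P ∧ s.card = k ∧ IsArc F ↑s}

/-- `numCollinearTriples F P` is the number of 3-element collinear subsets of `P`. -/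
noncomputable def numCollinearTriples (F : Type*) [Field F] (P : Finset (F × F)) : ℕ :=
  Nat.card {s : Finset (F × F) // s ⊆ P ∧ s.card = 3 ∧ Collinear F (↑s : Set (F × F))}

/-- `P` contains no `l` distinct collinear points. -/
def NoLCollinear (F : Type*) [Field F] (l : ℕ) (P : Finset (F × F)) : Prop :=
  ∀ s : Finset (F × F), s ⊆ P → s.card = l → ¬ Collinear F (↑s : Set (F × F))

/-- The product Bernoulli(p) measure on subsets of `F²` (encoded as functions
`F × F → Bool`): each point is included independently with probability `p`. -/
noncomputable def randomMeasure (F : Type*) [Field F] [Fintype F] (p : ℝ≥0) (hp : p ≤ 1) :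
    Measure ((F × F) → Bool) :=
  Measure.pi fun _ => (PMF.bernoulli p (by exact_mod_cast hp)).toMeasure

/-- The subset of `F²` corresponding to an indicator function `Q : F × F → Bool`. -/
noncomputable def toSubset {F : Type*} [Field F] [Fintype F] (Q : (F × F) → Bool) :
    Finset (F × F) := Finset.univ.filter fun x => Q x = true

/-- `L` is an affine line in `F²`, i.e. the affine span of two distinct points. -/
def IsAffineLine (F : Type*) [Field F] (L : Set (F × F)) : Prop :=
  ∃ a b : F × F, a ≠ b ∧ L = (affineSpan F {a, b} : Set (F × F))

section Counting

variable {α : Type*} [DecidableEq α]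

lemma card_mul_tsub_le_card_biUnion {ι : Type*} {I : Finset ι} {P : ι → Finset α}
    {N d : ℕ} (hN : ∀ i ∈ I, N ≤ #(P i))
    (hd : (I : Set ι).Pairwise fun i j => #(P i ∩ P j) ≤ d) :
    #I * (N - (#I - 1) * d) ≤ #(I.biUnion P) := by
  classical
  let overlap (i : ι) : Finset α := (I.erase i).biUnion fun j => P i ∩ P j
  have hprivate : ∀ i ∈ I, N - (#I - 1) * d ≤ #(P i \ overlap i) := by
    intro i hi
    have hoverlap : #(overlap i) ≤ #(I.erase i) * d :=
      card_biUnion_le_card_mul _ _ _ fun j hj =>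
        hd hi (mem_of_mem_erase hj) (ne_of_mem_erase hj).symm
    rw [card_erase_of_mem hi] at hoverlap
    exact (tsub_le_tsub (hN i hi) hoverlap).trans (le_card_sdiff _ _)
  have hdisj : (I : Set ι).PairwiseDisjoint fun i => P i \ overlap i := by
    intro i hi j _ hij
    refine disjoint_left.2 fun x hxi hxj => (mem_sdiff.1 hxj).2 ?_
    exact mem_biUnion.2 ⟨i, mem_erase.2 ⟨hij, hi⟩,
      mem_inter.2 ⟨(mem_sdiff.1 hxj).1, (mem_sdiff.1 hxi).1⟩⟩
  calc #I * (N - (#I - 1) * d) ≤ ∑ i ∈ I, #(P i \ overlap i) := card_nsmul_le_sum _ _ _ hprivate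
    _ = #(I.biUnion fun i => P i \ overlap i) := (card_biUnion hdisj).symm
    _ ≤ #(I.biUnion P) := card_le_card (biUnion_mono fun i _ => sdiff_subset)

variable [Fintype α] {𝒜 : Finset (Finset α)}

/-- The points outside `s` that can be added to `s` without leaving the family `𝒜`: the vertices
of the link of the face `s` if `𝒜` is a simplicial complex. -/
def linkVertices (𝒜 : Finset (Finset α)) (s : Finset α) : Finset α :=
  {x ∈ sᶜ | insert x s ∈ 𝒜}

lemma mem_linkVertices {s : Finset α} {x : α} :
    x ∈ linkVertices 𝒜 s ↔ x ∉ s ∧ insert x s ∈ 𝒜 := by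
  simp only [linkVertices, mem_filter, mem_compl]

lemma succ_mul_card_slice_succ (h𝒜 : IsLowerSet (𝒜 : Set (Finset α))) (k : ℕ) :
    (k + 1) * #(𝒜 # (k + 1)) = ∑ s ∈ 𝒜 # k, #(linkVertices 𝒜 s) := by
  have hflags : (k + 1) * #(𝒜 # (k + 1)) = ∑ t ∈ 𝒜 # (k + 1), #t := by
    rw [sum_const_nat fun t ht => (mem_slice.1 ht).2, mul_comm]
  rw [hflags, ← card_sigma, ← card_sigma]
  refine card_nbij' (fun p => ⟨p.1.erase p.2, p.2⟩) (fun p => ⟨insert p.2 p.1, p.2⟩)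
    ?_ ?_ ?_ ?_ <;> rintro ⟨s, x⟩ h <;>
    simp only [coe_sigma, Set.mem_sigma_iff, mem_coe, mem_slice, mem_linkVertices] at h ⊢
  · obtain ⟨⟨hs, hcard⟩, hx⟩ := h
    exact ⟨⟨h𝒜 (erase_subset x s) hs, by rw [card_erase_of_mem hx, hcard, Nat.add_sub_cancel]⟩,
      notMem_erase x s, by rwa [insert_erase hx]⟩
  · obtain ⟨⟨-, hcard⟩, hx, hins⟩ := h
    exact ⟨⟨hins, by rw [card_insert_of_notMem hx, hcard]⟩, mem_insert_self x s⟩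
  · rw [insert_erase h.2]
  · rw [erase_insert h.2.1]

variable {R : Type*} [CommRing R] [LinearOrder R] [IsStrictOrderedRing R] {a : ℕ → R} {k : ℕ}

lemma succ_mul_choose_succ_mul_prod (n k : ℕ) (a : ℕ → R) :
    (k + 1) * (n.choose (k + 1) * ∏ j ∈ range (k + 1), a j) =
      n.choose k * (∏ j ∈ range k, a j) * (a k * (n - k : ℕ)) := by
  have hchoose : (n.choose (k + 1) : R) * (k + 1) = n.choose k * (n - k : ℕ) := by
    exact_mod_cast Nat.choose_succ_right_eq n k
  rw [prod_range_succ]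
  linear_combination ((∏ j ∈ range k, a j) * a k) * hchoose

lemma choose_mul_prod_le_card_slice (h𝒜 : IsLowerSet (𝒜 : Set (Finset α))) (hempty : ∅ ∈ 𝒜)
    (ha : ∀ j < k, 0 ≤ a j)
    (hlink : ∀ j < k, ∀ s ∈ 𝒜 # j, a j * #sᶜ ≤ #(linkVertices 𝒜 s)) :
    (Fintype.card α).choose k * ∏ j ∈ range k, a j ≤ (#(𝒜 # k) : R) := by
  induction k with
  | zero =>
    have : 0 < #(𝒜 # 0) := card_pos.2 ⟨∅, mem_slice.2 ⟨hempty, card_empty⟩⟩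
    simpa [Nat.one_le_iff_ne_zero] using this.ne'
  | succ k ih =>
    have hk : ∀ s ∈ 𝒜 # k, a k * (Fintype.card α - k : ℕ) ≤ (#(linkVertices 𝒜 s) : R) := by
      intro s hs
      simpa only [card_compl, (mem_slice.1 hs).2] using hlink k k.lt_succ_self s hs
    have hak := ha k k.lt_succ_self
    refine le_of_mul_le_mul_left (a := (k + 1 : R)) ?_ (by positivity)
    calc _ = (Fintype.card α).choose k * (∏ j ∈ range k, a j) *
          (a k * (Fintype.card α - k : ℕ)) := succ_mul_choose_succ_mul_prod _ _ _
      _ ≤ #(𝒜 # k) * (a k * (Fintype.card α - k : ℕ)) := by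
        gcongr
        exact ih (fun j hj => ha j (hj.trans k.lt_succ_self))
          fun j hj => hlink j (hj.trans k.lt_succ_self)
      _ ≤ ∑ s ∈ 𝒜 # k, (#(linkVertices 𝒜 s) : R) := by
        simpa only [nsmul_eq_mul] using card_nsmul_le_sum _ _ _ hk
      _ = (k + 1) * #(𝒜 # (k + 1)) := by exact_mod_cast (succ_mul_card_slice_succ h𝒜 k).symm

lemma card_slice_le_choose_mul_prod (h𝒜 : IsLowerSet (𝒜 : Set (Finset α)))
    (ha : ∀ j < k, 0 ≤ a j)
    (hlink : ∀ j < k, ∀ s ∈ 𝒜 # j, #(linkVertices 𝒜 s) ≤ a j * #sᶜ) :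
    (#(𝒜 # k) : R) ≤ (Fintype.card α).choose k * ∏ j ∈ range k, a j := by
  induction k with
  | zero =>
    have : #(𝒜 # 0) ≤ 1 := card_le_one.2 fun s hs t ht => by
      rw [card_eq_zero.1 (mem_slice.1 hs).2, card_eq_zero.1 (mem_slice.1 ht).2]
    simpa using this
  | succ k ih =>
    have hk : ∀ s ∈ 𝒜 # k, (#(linkVertices 𝒜 s) : R) ≤ a k * (Fintype.card α - k : ℕ) := by
      intro s hs
      simpa only [card_compl, (mem_slice.1 hs).2] using hlink k k.lt_succ_self s hs
    have hak := ha k k.lt_succ_self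
    refine le_of_mul_le_mul_left (a := (k + 1 : R)) ?_ (by positivity)
    calc (k + 1) * (#(𝒜 # (k + 1)) : R) = ∑ s ∈ 𝒜 # k, (#(linkVertices 𝒜 s) : R) := by
          exact_mod_cast succ_mul_card_slice_succ h𝒜 k
      _ ≤ #(𝒜 # k) * (a k * (Fintype.card α - k : ℕ)) := by
        simpa only [nsmul_eq_mul] using sum_le_card_nsmul _ _ _ hk
      _ ≤ (Fintype.card α).choose k * (∏ j ∈ range k, a j) *
          (a k * (Fintype.card α - k : ℕ)) := by
        gcongr
        exact ih (fun j hj => ha j (hj.trans k.lt_succ_self))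
          fun j hj => hlink j (hj.trans k.lt_succ_self)
      _ = _ := (succ_mul_choose_succ_mul_prod _ _ _).symm

end Counting

section Choose

lemma sum_range_choose_eq_choose_succ (n r : ℕ) :
    ∑ j ∈ range n, j.choose r = n.choose (r + 1) := by
  induction n with
  | zero => rfl
  | succ n ih => rw [sum_range_succ, ih, Nat.choose_succ_succ', add_comm]

lemma div_pow_le_choose {n r : ℕ} (h : r ≤ n) : ((n : ℝ) / r) ^ r ≤ n.choose r := by
  induction r generalizing n with
  | zero => simp
  | succ r ih =>
    obtain ⟨n, rfl⟩ := Nat.exists_eq_add_one.2 (r.succ_pos.trans_le h)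
    have hrn : r ≤ n := Nat.le_of_succ_le_succ h
    have hrec : ((n + 1 : ℕ) : ℝ) / (r + 1 : ℕ) * n.choose r = (n + 1).choose (r + 1) := by
      rw [div_mul_eq_mul_div, div_eq_iff (by positivity)]
      exact_mod_cast Nat.add_one_mul_choose_eq n r
    have hratio : (((n + 1 : ℕ) : ℝ) / (r + 1 : ℕ)) ^ r ≤ ((n : ℝ) / r) ^ r := by
      rcases r.eq_zero_or_pos with rfl | hr
      · simp
      · gcongr ?_ ^ r
        rw [div_le_div_iff₀ (by positivity) (by positivity)]
        exact_mod_cast (by linarith : (n + 1) * r ≤ n * (r + 1))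
    rw [pow_succ', ← hrec]
    gcongr
    exact hratio.trans (ih hrn)

lemma two_mul_choose_two_add_two_le {j q : ℕ} (hj : (j + 1) ^ 2 ≤ q) (hq : 2 ≤ q) :
    2 * j.choose 2 + 2 ≤ q := by
  rcases j with _ | i
  · simpa using hq
  · have : 2 * (i + 1).choose 2 ≤ (i + 1) * i := by
      rw [Nat.choose_two_right]
      exact Nat.mul_div_le _ _
    nlinarith

end Choose

lemma exp_neg_two_mul_le_one_sub {x : ℝ} (h0 : 0 ≤ x) (h1 : x ≤ 1 / 2) :
    Real.exp (-(2 * x)) ≤ 1 - x := by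
  rw [Real.exp_neg, inv_le_iff_one_le_mul₀ (Real.exp_pos _)]
  calc (1 : ℝ) ≤ (1 - x) * (2 * x + 1) := by nlinarith
    _ ≤ (1 - x) * Real.exp (2 * x) := by
      gcongr
      · linarith
      · exact Real.add_one_le_exp _

section Affine

variable {k V P : Type*} [DivisionRing k] [AddCommGroup V] [Module k V] [AddTorsor V P]

lemma natCard_affineSpan_pair {a b : P} (hab : a ≠ b) : Nat.card line[k, a, b] = Nat.card k := by
  have hrange : (line[k, a, b] : Set P) = Set.range (AffineMap.lineMap a b : k → P) := by
    ext x
    exact mem_affineSpan_pair_iff_exists_lineMap_eq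
  rw [← Nat.card_range_of_injective (AffineMap.lineMap_injective k hab), ← hrange]
  rfl

end Affine

section Arcs

variable {F : Type*} [Field F] {s t : Set (F × F)} {a b x : F × F}

lemma isArc_empty : IsArc F ∅ := fun _ ha => ha.elim

lemma IsArc.mono (ht : IsArc F t) (hst : s ⊆ t) : IsArc F s :=
  fun a ha b hb c hc => ht a (hst ha) b (hst hb) c (hst hc)

lemma IsArc.inter_affineSpan_pair (hs : IsArc F s) (ha : a ∈ s) (hb : b ∈ s) (hab : a ≠ b) :
    s ∩ line[F, a, b] = {a, b} := by
  refine Set.Subset.antisymm ?_ (Set.subset_inter (Set.pair_subset ha hb) (subset_affineSpan F _))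
  rintro c ⟨hc, hcab⟩
  by_contra hne
  obtain ⟨hca, hcb⟩ : c ≠ a ∧ c ≠ b := by simpa using hne
  exact hs c hc a ha b hb hca hcb hab (collinear_insert_of_mem_affineSpan_pair hcab)

lemma IsArc.inter_affineSpan {s e : Finset (F × F)} (hs : IsArc F (s : Set (F × F)))
    (he : e ∈ s.powersetCard 2) :
    (s : Set (F × F)) ∩ affineSpan F (e : Set (F × F)) = e := by
  classical
  obtain ⟨hes, hcard⟩ := mem_powersetCard.1 he
  obtain ⟨a, b, hab, rfl⟩ := card_eq_two.1 hcard
  rw [coe_pair]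
  exact hs.inter_affineSpan_pair (hes (by simp)) (hes (by simp)) hab

lemma IsArc.insert_iff (hs : IsArc F s) (hx : x ∉ s) :
    IsArc F (insert x s) ↔ ∀ a ∈ s, ∀ b ∈ s, a ≠ b → x ∉ line[F, a, b] := by
  constructor
  · intro h a ha b hb hab hxab
    have hmem : x ∈ insert x s ∩ line[F, a, b] := ⟨Set.mem_insert x s, hxab⟩
    rw [h.inter_affineSpan_pair (Set.mem_insert_of_mem x ha) (Set.mem_insert_of_mem x hb) hab]
      at hmem
    rcases hmem with rfl | rfl
    exacts [hx ha, hx hb]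
  · intro h
    have hx_pair : ∀ a ∈ s, ∀ b ∈ s, a ≠ b → ¬ Collinear F {x, a, b} := fun a ha b hb hab hcol =>
      h a ha b hb hab (hcol.mem_affineSpan_of_mem_of_ne (by simp) (by simp) (by simp) hab)
    rintro a (rfl | ha) b (rfl | hb) c (rfl | hc) hab hac hbc
    any_goals contradiction
    · exact hx_pair b hb c hc hbc
    · rw [Set.insert_comm]
      exact hx_pair a ha c hc hac
    · rw [Set.pair_comm b c, Set.insert_comm]
      exact hx_pair a ha b hb hab
    · exact hs a ha b hb c hc hab hac hbc

end Arcs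

section ArcFinsets

variable (F : Type*) [Field F] [Fintype F]

open Classical in
/-- The arcs in `F²`, as a finite family of finite sets. -/
noncomputable def arcs : Finset (Finset (F × F)) := {s | IsArc F (s : Set (F × F))}

variable {F} in
lemma mem_arcs {s : Finset (F × F)} : s ∈ arcs F ↔ IsArc F (s : Set (F × F)) := by
  simp only [arcs, mem_filter, mem_univ, true_and]

lemma empty_mem_arcs : ∅ ∈ arcs F := by
  rw [mem_arcs, coe_empty]
  exact isArc_empty

lemma isLowerSet_arcs : IsLowerSet (arcs F : Set (Finset (F × F))) := fun _ _ hst hs =>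
  mem_arcs.2 ((mem_arcs.1 hs).mono (coe_subset.2 hst))

lemma numArcs_eq_card_slice (k : ℕ) : numArcs F k = #((arcs F).slice k) := by
  rw [numArcs, ← Nat.card_eq_finsetCard]
  simp only [mem_slice, mem_arcs, and_comm]

end ArcFinsets

section Secants

variable {F : Type*} [Field F] [Fintype F] [DecidableEq F] {s e : Finset (F × F)}

open Classical in
/-- The points outside `s` on the affine span of `e`; this is a secant of `s` without its points
on `s` when `e` is a pair of points of `s`. -/
noncomputable def secantPoints (s e : Finset (F × F)) : Finset (F × F) :=
  {x ∈ sᶜ | x ∈ affineSpan F (e : Set (F × F))}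

/-- The points outside `s` that lie on a line through two points of `s`. Unordered pairs of points
are encoded as two-element finsets, so that there are `(#s).choose 2` of them. -/
noncomputable def coveredPoints (s : Finset (F × F)) : Finset (F × F) :=
  (s.powersetCard 2).biUnion (secantPoints s)

lemma mem_secantPoints {x : F × F} :
    x ∈ secantPoints s e ↔ x ∉ s ∧ x ∈ affineSpan F (e : Set (F × F)) := by
  simp only [secantPoints, mem_filter, mem_compl]

lemma mem_coveredPoints {x : F × F} :
    x ∈ coveredPoints s ↔ x ∉ s ∧ ∃ a ∈ s, ∃ b ∈ s, a ≠ b ∧ x ∈ line[F, a, b] := by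
  simp only [coveredPoints, mem_biUnion, mem_powersetCard, mem_secantPoints]
  constructor
  · rintro ⟨e, ⟨hes, he⟩, hx, hxe⟩
    obtain ⟨a, b, hab, rfl⟩ := card_eq_two.1 he
    rw [coe_pair] at hxe
    exact ⟨hx, a, hes (by simp), b, hes (by simp), hab, hxe⟩
  · rintro ⟨hx, a, ha, b, hb, hab, hxab⟩
    refine ⟨{a, b}, ⟨insert_subset ha (singleton_subset_iff.2 hb), card_pair hab⟩, hx, ?_⟩
    rwa [coe_pair]

lemma linkVertices_arcs (hs : IsArc F (s : Set (F × F))) :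
    linkVertices (arcs F) s = sᶜ \ coveredPoints s := by
  ext x
  rw [mem_linkVertices, mem_sdiff, mem_compl, mem_coveredPoints]
  refine and_congr_right fun hx => ?_
  rw [mem_arcs, coe_insert, hs.insert_iff (mem_coe.not.2 hx)]
  simp only [mem_coe, hx, not_false_eq_true, true_and, not_exists, not_and]

lemma card_linkVertices_arcs_add (hs : IsArc F (s : Set (F × F))) :
    #(linkVertices (arcs F) s) + #(coveredPoints s) = #sᶜ := by
  rw [linkVertices_arcs hs]
  exact card_sdiff_add_card_eq_card fun x hx => mem_compl.2 (mem_coveredPoints.1 hx).1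

lemma IsArc.card_secantPoints (hs : IsArc F (s : Set (F × F))) (he : e ∈ s.powersetCard 2) :
    #(secantPoints s e) = Fintype.card F - 2 := by
  classical
  have hsdiff :
      secantPoints s e = ({x | x ∈ affineSpan F (e : Set (F × F))} : Finset (F × F)) \ s := by
    ext x
    simp only [mem_secantPoints, mem_sdiff, mem_filter, mem_univ, true_and, and_comm]
  have hinter : s ∩ ({x | x ∈ affineSpan F (e : Set (F × F))} : Finset (F × F)) = e := by
    rw [← coe_inj, coe_inter, coe_filter_univ]
    exact hs.inter_affineSpan he
  have hcard := (mem_powersetCard.1 he).2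
  rw [hsdiff, card_sdiff, hinter, hcard]
  obtain ⟨a, b, hab, rfl⟩ := card_eq_two.1 hcard
  rw [← Fintype.card_subtype, ← Nat.card_eq_fintype_card, ← Nat.card_eq_fintype_card, coe_pair]
  exact congrArg (· - 2) (natCard_affineSpan_pair hab)

lemma IsArc.card_secantPoints_inter_le_one (hs : IsArc F (s : Set (F × F))) :
    (s.powersetCard 2 : Set (Finset (F × F))).Pairwise
      fun e f => #(secantPoints s e ∩ secantPoints s f) ≤ 1 := by
  intro e he f hf hne
  refine card_le_one.2 fun x hx y hy => by_contra fun hxy => hne ?_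
  simp only [mem_inter, mem_secantPoints] at hx hy
  have hspan : ∀ g ∈ s.powersetCard 2, x ∈ affineSpan F (g : Set (F × F)) →
      y ∈ affineSpan F (g : Set (F × F)) → affineSpan F (g : Set (F × F)) = line[F, x, y] := by
    intro g hg hxg hyg
    obtain ⟨a, b, -, rfl⟩ := card_eq_two.1 (mem_powersetCard.1 hg).2
    rw [coe_pair] at hxg hyg ⊢
    exact (affineSpan_pair_eq_of_mem_of_mem_of_ne hxg hyg hxy).symm
  rw [← coe_inj, ← hs.inter_affineSpan he, ← hs.inter_affineSpan hf,
    hspan e he hx.1.2 hy.1.2, hspan f hf hx.2.2 hy.2.2]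

lemma IsArc.card_mul_card_coveredPoints_le (hs : IsArc F (s : Set (F × F)))
    (hcard : #s ≤ 2 * Fintype.card F) :
    Fintype.card F * #(coveredPoints s) ≤ (#s).choose 2 * #sᶜ := by
  have hcover : #(coveredPoints s) ≤ (#s).choose 2 * (Fintype.card F - 2) := by
    rw [← card_powersetCard]
    exact card_biUnion_le_card_mul _ _ _ fun e he => (hs.card_secantPoints he).le
  have hcompl : Fintype.card F * (Fintype.card F - 2) ≤ #sᶜ := by
    rw [card_compl, Fintype.card_prod, Nat.mul_sub, mul_comm _ 2]
    exact Nat.sub_le_sub_left hcard _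
  calc _ ≤ Fintype.card F * ((#s).choose 2 * (Fintype.card F - 2)) := by gcongr
    _ = (#s).choose 2 * (Fintype.card F * (Fintype.card F - 2)) := by ring
    _ ≤ _ := by gcongr

lemma IsArc.choose_two_mul_card_compl_le (hs : IsArc F (s : Set (F × F)))
    (hcard : 2 * (#s).choose 2 + 2 ≤ Fintype.card F) :
    (#s).choose 2 * #sᶜ ≤ 2 * Fintype.card F * #(coveredPoints s) := by
  have hcover : (#s).choose 2 * (Fintype.card F - 2 - ((#s).choose 2 - 1)) ≤
      #(coveredPoints s) := by
    rw [← card_powersetCard, ← mul_one (#(s.powersetCard 2) - 1)]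
    exact card_mul_tsub_le_card_biUnion (fun e he => (hs.card_secantPoints he).ge)
      hs.card_secantPoints_inter_le_one
  have hcompl : #sᶜ ≤ Fintype.card F * Fintype.card F :=
    (card_le_univ _).trans_eq (Fintype.card_prod F F)
  rcases ((#s).choose 2).eq_zero_or_pos with hzero | hpos
  · simp [hzero]
  have hhalf : Fintype.card F ≤ 2 * (Fintype.card F - 2 - ((#s).choose 2 - 1)) := by omega
  calc _ ≤ (#s).choose 2 * (Fintype.card F * Fintype.card F) := by gcongr
    _ ≤ (#s).choose 2 *
        (Fintype.card F * (2 * (Fintype.card F - 2 - ((#s).choose 2 - 1)))) := by gcongr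
    _ = 2 * Fintype.card F *
        ((#s).choose 2 * (Fintype.card F - 2 - ((#s).choose 2 - 1))) := by ring
    _ ≤ _ := by gcongr

lemma IsArc.exp_mul_card_compl_le_card_linkVertices (hs : IsArc F (s : Set (F × F)))
    (hcard : #s ≤ 2 * Fintype.card F) (hchoose : 2 * (#s).choose 2 ≤ Fintype.card F) :
    Real.exp (-(2 * ((#s).choose 2 / Fintype.card F))) * #sᶜ ≤ #(linkVertices (arcs F) s) := by
  have hq : (0 : ℝ) < Fintype.card F := Nat.cast_pos.2 Fintype.card_pos
  have hcover : (#(coveredPoints s) : ℝ) ≤ (#s).choose 2 / Fintype.card F * #sᶜ := by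
    rw [div_mul_eq_mul_div, le_div_iff₀' hq]
    exact_mod_cast hs.card_mul_card_coveredPoints_le hcard
  have hhalf : ((#s).choose 2 : ℝ) / Fintype.card F ≤ 1 / 2 := by
    rw [div_le_div_iff₀ hq two_pos]
    exact_mod_cast (by omega : (#s).choose 2 * 2 ≤ 1 * Fintype.card F)
  have hadd : (#(linkVertices (arcs F) s) : ℝ) + #(coveredPoints s) = #sᶜ := by
    exact_mod_cast card_linkVertices_arcs_add hs
  calc _ ≤ (1 - (#s).choose 2 / Fintype.card F : ℝ) * #sᶜ := by
        gcongr
        exact exp_neg_two_mul_le_one_sub (by positivity) hhalf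
    _ ≤ _ := by linarith

lemma IsArc.card_linkVertices_le_exp_mul_card_compl (hs : IsArc F (s : Set (F × F)))
    (hcard : 2 * (#s).choose 2 + 2 ≤ Fintype.card F) :
    #(linkVertices (arcs F) s) ≤ Real.exp (-((#s).choose 2 / (2 * Fintype.card F))) * #sᶜ := by
  have hcover : ((#s).choose 2 : ℝ) / (2 * Fintype.card F) * #sᶜ ≤ #(coveredPoints s) := by
    rw [div_mul_eq_mul_div, div_le_iff₀' (by positivity)]
    exact_mod_cast hs.choose_two_mul_card_compl_le hcard
  have hadd : (#(linkVertices (arcs F) s) : ℝ) + #(coveredPoints s) = #sᶜ := by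
    exact_mod_cast card_linkVertices_arcs_add hs
  calc _ ≤ (1 - (#s).choose 2 / (2 * Fintype.card F) : ℝ) * #sᶜ := by linarith
    _ ≤ _ := by
      gcongr
      exact Real.one_sub_le_exp_neg _

end Secants

section NumArcs

variable (F : Type*) [Field F] [Fintype F] {k : ℕ}

lemma choose_mul_exp_le_numArcs (hk : k ^ 2 ≤ Fintype.card F) :
    ((Fintype.card F ^ 2).choose k : ℝ) * Real.exp (-(2 * (k.choose 3 / Fintype.card F))) ≤
      numArcs F k := by
  classical
  have hexp : Real.exp (-(2 * (k.choose 3 / Fintype.card F))) =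
      ∏ j ∈ range k, Real.exp (-(2 * (j.choose 2 / Fintype.card F))) := by
    rw [← Real.exp_sum, sum_neg_distrib, ← mul_sum, ← sum_div, ← Nat.cast_sum,
      sum_range_choose_eq_choose_succ]
  rw [hexp, numArcs_eq_card_slice, sq, ← Fintype.card_prod]
  refine choose_mul_prod_le_card_slice (isLowerSet_arcs F) (empty_mem_arcs F)
    (fun j _ => (Real.exp_pos _).le) fun j hj s hs => ?_
  obtain ⟨harc, rfl⟩ := mem_slice.1 hs
  have hsq : (#s + 1) ^ 2 ≤ Fintype.card F := (Nat.pow_le_pow_left hj 2).trans hk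
  have hchoose := two_mul_choose_two_add_two_le hsq Fintype.one_lt_card
  exact (mem_arcs.1 harc).exp_mul_card_compl_le_card_linkVertices (by nlinarith) (by omega)

lemma numArcs_le_choose_mul_exp (hk : k ^ 2 ≤ Fintype.card F) :
    numArcs F k ≤
      ((Fintype.card F ^ 2).choose k : ℝ) * Real.exp (-(k.choose 3 / (2 * Fintype.card F))) := by
  classical
  have hexp : Real.exp (-(k.choose 3 / (2 * Fintype.card F))) =
      ∏ j ∈ range k, Real.exp (-(j.choose 2 / (2 * Fintype.card F))) := by
    rw [← Real.exp_sum, sum_neg_distrib, ← sum_div, ← Nat.cast_sum,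
      sum_range_choose_eq_choose_succ]
  rw [hexp, numArcs_eq_card_slice, sq, ← Fintype.card_prod]
  refine card_slice_le_choose_mul_prod (isLowerSet_arcs F)
    (fun j _ => (Real.exp_pos _).le) fun j hj s hs => ?_
  obtain ⟨harc, rfl⟩ := mem_slice.1 hs
  have hsq : (#s + 1) ^ 2 ≤ Fintype.card F := (Nat.pow_le_pow_left hj 2).trans hk
  exact (mem_arcs.1 harc).card_linkVertices_le_exp_mul_card_compl
    (two_mul_choose_two_add_two_le hsq Fintype.one_lt_card)

theorem arc_count_small_k_general (hk3 : 3 ≤ k) (hk : (k : ℝ) ≤ √(Fintype.card F)) :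
    ((Fintype.card F ^ 2).choose k : ℝ) *
        Real.exp (-(1 / 3) * (k : ℝ) ^ 3 / (Fintype.card F : ℝ)) ≤ (numArcs F k : ℝ) ∧
    (numArcs F k : ℝ) ≤ ((Fintype.card F ^ 2).choose k : ℝ) *
        Real.exp (-(1 / 54) * (k : ℝ) ^ 3 / (Fintype.card F : ℝ)) := by
  have hkq : k ^ 2 ≤ Fintype.card F := by
    exact_mod_cast (Real.le_sqrt' (by positivity)).1 hk
  constructor
  · have hupper : (k.choose 3 : ℝ) ≤ k ^ 3 / 6 := by
      simpa [Nat.factorial] using Nat.choose_le_pow_div (α := ℝ) 3 k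
    refine le_trans ?_ (choose_mul_exp_le_numArcs F hkq)
    gcongr
    calc _ = -(2 * ((k : ℝ) ^ 3 / 6 / Fintype.card F)) := by ring
      _ ≤ _ := by gcongr
  · have hlower : (k : ℝ) ^ 3 / 27 ≤ k.choose 3 := by
      have := div_pow_le_choose hk3
      norm_num [div_pow] at this
      exact this
    refine (numArcs_le_choose_mul_exp F hkq).trans ?_
    gcongr
    calc _ ≤ -((k : ℝ) ^ 3 / 27 / (2 * Fintype.card F)) := by gcongr
      _ = _ := by ring

end NumArcs

theorem arc_count_small_k :
    ∃ c : ℝ, 0 < c ∧ ∀ δ : ℝ, 0 < δ → ∃ C : ℝ, 0 < C ∧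
      ∀ (F : Type) [Field F] [Fintype F], ∀ k : ℕ,
        3 ≤ k → (k : ℝ) ≤ Real.sqrt (Fintype.card F) / (1 + δ) →
        ((Fintype.card F ^ 2).choose k : ℝ) *
            Real.exp (-C * (k : ℝ) ^ 3 / (Fintype.card F : ℝ)) ≤ (numArcs F k : ℝ) ∧
        (numArcs F k : ℝ) ≤ ((Fintype.card F ^ 2).choose k : ℝ) *
            Real.exp (-c * (k : ℝ) ^ 3 / (Fintype.card F : ℝ)) :=
  ⟨1 / 54, by norm_num, fun δ hδ => ⟨1 / 3, by norm_num, fun F _ _ _ hk3 hk =>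
    arc_count_small_k_general F hk3 (hk.trans (div_le_self (Real.sqrt_nonneg _) (by linarith)))⟩⟩
end

section
/- For every δ > 0 there exists q₀ such that for every prime power q ≥ q₀ and every integer k with q^{1/2+δ} ≤ k ≤ q, one has A(q,k) ≤ binom(⌈2 q^{2+3δ/2}/k⌉, k). (Equivalently, writing k = q^t with t ≥ 1/2 + δ, A(q,k) ≤ binom(⌈2 q^{2−t+3δ/2}⌉, k).) -/
/-!
The bound comes from a container argument of Kleitman–Winston type. Write `q = |F|` and fix an arc
`T` with `r ≈ √q` points. Joining two points outside `T` when their line meets `T` gives a graph in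
which every arc containing `T` is independent.

This graph is dense on large sets. Each `t ∈ T` sees a set `X` along `q + 1` lines, so by
Cauchy–Schwarz at least `|X|² / (q + 1)` ordered pairs in `X` are collinear with `t`; a line meets
the arc `T` in at most two points, so each pair is counted at most twice. Hence once
`|X| > 4 (q + 1)`, some vertex is joined to a proportion `r / (4 (q + 1))` of `X`. Branching on such
vertices, about `(q / r) log q` of the vertices of an independent set suffice to confine the rest of
it to `4 (q + 1)` points.

An arc is therefore described by `O(√q log q)` points and a subset of a set of size `4 (q + 1)`. The
choice of the former costs a factor at most `2 ^ k` as soon as `k ≥ 100 √q (log q)²`, and this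
factor is absorbed by `2 ^ k * binom(n, k) ≤ binom(2 n, k)`.
-/

open Finset MeasureTheory
open scoped NNReal ENNReal

section KleitmanWinston

variable {V : Type*} [DecidableEq V] (G : SimpleGraph V) [DecidableRel G.Adj]

/-- The independent sets of `G` that have `k` vertices and are contained in `X`. -/
def indepSubsets (X : Finset V) (k : ℕ) : Finset (Finset V) :=
  {A ∈ X.powersetCard k | G.IsIndepSet A}

lemma mem_indepSubsets {X A : Finset V} {k : ℕ} :
    A ∈ indepSubsets G X k ↔ (A ⊆ X ∧ #A = k) ∧ G.IsIndepSet A := by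
  rw [indepSubsets, mem_filter, mem_powersetCard]

lemma card_indepSubsets_le_choose {X : Finset V} {n : ℕ} (hX : #X ≤ n) (k : ℕ) :
    #(indepSubsets G X k) ≤ n.choose k :=
  calc #(indepSubsets G X k) ≤ #(X.powersetCard k) := card_filter_le _ _
    _ = (#X).choose k := card_powersetCard k X
    _ ≤ n.choose k := Nat.choose_le_choose k hX

lemma card_indepSubsets_succ_le (X : Finset V) (v : V) (k : ℕ) :
    #(indepSubsets G X (k + 1)) ≤ #(indepSubsets G (X.erase v) (k + 1)) +
      #(indepSubsets G {w ∈ X.erase v | ¬ G.Adj v w} k) := by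
  have cover : indepSubsets G X (k + 1) ⊆ indepSubsets G (X.erase v) (k + 1) ∪
      (indepSubsets G {w ∈ X.erase v | ¬ G.Adj v w} k).image (insert v) := by
    intro A hA
    obtain ⟨⟨hAX, hAk⟩, hind⟩ := (mem_indepSubsets G).1 hA
    by_cases hvA : v ∈ A
    · refine mem_union_right _ (mem_image.2 ⟨A.erase v, ?_, insert_erase hvA⟩)
      refine (mem_indepSubsets G).2 ⟨⟨fun w hw => ?_, ?_⟩, hind.mono (erase_subset v A)⟩
      · exact mem_filter.2 ⟨erase_subset_erase v hAX hw,
          hind hvA (mem_of_mem_erase hw) (ne_of_mem_erase hw).symm⟩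
      · rw [card_erase_of_mem hvA, hAk, Nat.add_sub_cancel]
    · exact mem_union_left _
        ((mem_indepSubsets G).2 ⟨⟨subset_erase.2 ⟨hAX, hvA⟩, hAk⟩, hind⟩)
  calc #(indepSubsets G X (k + 1)) ≤ _ := card_le_card cover
    _ ≤ _ := card_union_le _ _
    _ ≤ _ := Nat.add_le_add_left card_image_le _

lemma card_erase_filter_not_adj_le {β : ℝ} {X : Finset V} {v : V}
    (hdeg : β * #X ≤ #{w ∈ X | G.Adj v w}) :
    (#{w ∈ X.erase v | ¬ G.Adj v w} : ℝ) ≤ (1 - β) * #X := by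
  have hsplit : (#{w ∈ X | G.Adj v w} + #{w ∈ X | ¬ G.Adj v w} : ℝ) = #X := by
    exact_mod_cast card_filter_add_card_filter_not (s := X) (G.Adj v)
  have hsub : (#{w ∈ X.erase v | ¬ G.Adj v w} : ℝ) ≤ #{w ∈ X | ¬ G.Adj v w} := by
    exact_mod_cast card_le_card (filter_subset_filter _ (erase_subset v X))
  linarith

/-- The exponent `s` bounds how often a vertex of high degree can be selected before at most `R`
vertices remain: each selection shrinks the vertex set by a factor `1 - β`. -/
theorem card_indepSubsets_le {β : ℝ} {R : ℕ}
    (hG : ∀ X : Finset V, R < #X → ∃ v ∈ X, β * #X ≤ #{w ∈ X | G.Adj v w})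
    (X : Finset V) (s k : ℕ) (hs : (1 - β) ^ s * #X ≤ R) (hk : k ≤ R / 2) :
    #(indepSubsets G X k) ≤ (#X + 1) ^ s * R.choose k := by
  induction X using Finset.strongInduction generalizing s k with
  | H X ih =>
  rcases le_or_gt (#X) R with hX | hX
  · exact (card_indepSubsets_le_choose G hX k).trans (Nat.le_mul_of_pos_left _ (by positivity))
  rcases s with _ | s
  · exact absurd hX (by simpa using hs)
  rcases k with _ | k
  · exact (card_indepSubsets_le_choose G le_rfl 0).trans (by simpa using Nat.one_le_pow' _ _)
  obtain ⟨v, hv, hdeg⟩ := hG X hX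
  set Y : Finset V := {w ∈ X.erase v | ¬ G.Adj v w}
  have hYX : Y ⊆ X.erase v := filter_subset _ _
  have hXv : #(X.erase v) + 1 = #X := card_erase_add_one hv
  have hY : (#Y : ℝ) ≤ (1 - β) * #X := card_erase_filter_not_adj_le G hdeg
  have hβ : 0 ≤ 1 - β :=
    nonneg_of_mul_nonneg_left ((Nat.cast_nonneg _).trans hY) (by exact_mod_cast hX.pos)
  have avoiding : #(indepSubsets G (X.erase v) (k + 1)) ≤ #X ^ (s + 1) * R.choose (k + 1) := by
    rw [← hXv]
    refine ih _ (erase_ssubset hv) (s + 1) (k + 1) (le_trans ?_ hs) hk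
    gcongr
    exact erase_subset v X
  have containing : #(indepSubsets G Y k) ≤ #X ^ s * R.choose (k + 1) := by
    have hYs : (1 - β) ^ s * #Y ≤ R := by
      refine le_trans ?_ hs
      rw [pow_succ, mul_assoc]
      gcongr
    refine (ih Y (hYX.trans_ssubset (erase_ssubset hv)) s k hYs (by omega)).trans ?_
    gcongr ?_ ^ s * ?_
    · exact (Nat.succ_le_succ (card_le_card hYX)).trans_eq hXv
    · exact Nat.choose_le_succ_of_lt_half_left (by omega)
  calc #(indepSubsets G X (k + 1)) ≤ _ := card_indepSubsets_succ_le G X v k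
    _ ≤ #X ^ (s + 1) * R.choose (k + 1) + #X ^ s * R.choose (k + 1) :=
      add_le_add avoiding containing
    _ = #X ^ s * (#X + 1) * R.choose (k + 1) := by ring
    _ ≤ (#X + 1) ^ s * (#X + 1) * R.choose (k + 1) := by gcongr; omega
    _ = (#X + 1) ^ (s + 1) * R.choose (k + 1) := by ring

end KleitmanWinston

lemma sq_card_le_card_image_mul_sum_card_fiber {α γ : Type*} [DecidableEq γ] (X : Finset α)
    (f : α → γ) : #X ^ 2 ≤ #(X.image f) * ∑ x ∈ X, #{y ∈ X | f y = f x} := by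
  rw [sum_comp (fun c => #{y ∈ X | f y = c}) f, card_eq_sum_card_image f X]
  simpa only [sq, smul_eq_mul, Nat.cast_id] using sq_sum_le_card_mul_sum_sq (s := X.image f)
    (f := fun c => #{y ∈ X | f y = c})

lemma one_sub_pow_mul_le_one {β N : ℝ} {s : ℕ} (hβ : β ≤ 1) (hN : 0 < N)
    (h : Real.log N ≤ s * β) : (1 - β) ^ s * N ≤ 1 := by
  calc (1 - β) ^ s * N ≤ Real.exp (-β) ^ s * Real.exp (Real.log N) := by
        rw [Real.exp_log hN]
        gcongr
        exact Real.one_sub_le_exp_neg β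
    _ = Real.exp (Real.log N - s * β) := by
      rw [← Real.exp_nat_mul, ← Real.exp_add]
      ring_nf
    _ ≤ 1 := Real.exp_le_one_iff.2 (sub_nonpos.2 h)

lemma pow_mul_choose_le_choose_mul (c n k : ℕ) : c ^ k * n.choose k ≤ (c * n).choose k := by
  have step (j : ℕ) : c * (n - j) ≤ c * n - j := by
    rcases c.eq_zero_or_pos with rfl | hc
    · simp
    · rw [Nat.mul_sub]
      exact Nat.sub_le_sub_left (Nat.le_mul_of_pos_left j hc) _
  have descFactorial_le : c ^ k * n.descFactorial k ≤ (c * n).descFactorial k := by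
    rw [Nat.descFactorial_eq_prod_range, Nat.descFactorial_eq_prod_range, ← card_range k,
      ← prod_const, card_range, ← prod_mul_distrib]
    exact prod_le_prod' fun j _ => step j
  rw [Nat.descFactorial_eq_factorial_mul_choose, Nat.descFactorial_eq_factorial_mul_choose,
    Nat.mul_left_comm] at descFactorial_le
  exact Nat.le_of_mul_le_mul_left descFactorial_le k.factorial_pos

section Plane

variable {F : Type*} [Field F]

/-- The direction of a vector of `F²`, as a point of the projective line `F ∪ {∞}`: its slope, with
`none` standing for `∞`. The zero vector is given the direction `∞`. -/
def direction [DecidableEq F] (u : F × F) : Option F :=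
  if u.1 = 0 then none else some (u.2 / u.1)

lemma collinear_of_direction_eq [DecidableEq F] {t x y : F × F}
    (h : direction (x - t) = direction (y - t)) : Collinear F {t, x, y} := by
  suffices ∃ v : F × F, (∃ a : F, x - t = a • v) ∧ ∃ b : F, y - t = b • v by
    obtain ⟨v, ⟨a, ha⟩, b, hb⟩ := this
    refine (collinear_iff_of_mem (p₀ := t) (by simp)).2 ⟨v, ?_⟩
    rintro p (rfl | rfl | rfl)
    · exact ⟨0, by simp⟩
    · exact ⟨a, sub_eq_iff_eq_add.1 ha⟩
    · exact ⟨b, sub_eq_iff_eq_add.1 hb⟩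
  generalize x - t = u at h ⊢
  generalize y - t = w at h ⊢
  unfold direction at h
  by_cases hu : u.1 = 0 <;> by_cases hw : w.1 = 0
  · exact ⟨(0, 1), ⟨u.2, by ext <;> simp [hu]⟩, w.2, by ext <;> simp [hw]⟩
  · simp [hu, hw] at h
  · simp [hu, hw] at h
  · have hslope : u.2 / u.1 = w.2 / w.1 := by simpa [hu, hw] using h
    refine ⟨(1, u.2 / u.1), ⟨u.1, ?_⟩, w.1, ?_⟩
    · ext <;> simp [hu, mul_div_cancel₀]
    · ext <;> simp [hw, hslope, mul_div_cancel₀]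

open Classical in
lemma sq_card_le_mul_sum_card_collinear [Fintype F] (X : Finset (F × F)) (t : F × F) :
    #X ^ 2 ≤ (Fintype.card F + 1) * ∑ x ∈ X, #{y ∈ X | Collinear F {t, x, y}} := by
  calc #X ^ 2 ≤ #(X.image fun x => direction (x - t)) *
          ∑ x ∈ X, #{y ∈ X | direction (y - t) = direction (x - t)} :=
        sq_card_le_card_image_mul_sum_card_fiber X _
    _ ≤ _ := by
      gcongr with x _ y
      · exact (card_le_univ _).trans_eq Fintype.card_option
      · exact fun h => collinear_of_direction_eq h.symm

lemma IsArc.mono_s1 {A T : Set (F × F)} (hA : IsArc F A) (hTA : T ⊆ A) : IsArc F T :=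
  fun a ha b hb c hc => hA a (hTA ha) b (hTA hb) c (hTA hc)

open Classical in
lemma IsArc.card_filter_collinear_le_two {T : Finset (F × F)} (hT : IsArc F (T : Set (F × F)))
    {x y : F × F} (hxy : x ≠ y) : #{t ∈ T | Collinear F {t, x, y}} ≤ 2 := by
  have mem_line {t : F × F} (ht : Collinear F {t, x, y}) : t ∈ line[F, x, y] :=
    ht.mem_affineSpan_of_mem_of_ne (by simp) (by simp) (by simp) hxy
  by_contra! hcard
  obtain ⟨a, b, c, ha, hb, hc, hab, hac, hbc⟩ := two_lt_card_iff.1 hcard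
  rw [mem_filter] at ha hb hc
  exact hT a ha.1 b hb.1 c hc.1 hab hac hbc
    (collinear_triple_of_mem_affineSpan_pair (mem_line ha.2) (mem_line hb.2) (mem_line hc.2))

lemma IsArc.card_le [Fintype F] {A : Finset (F × F)} (hA : IsArc F (A : Set (F × F))) :
    #A ≤ Fintype.card F + 2 := by
  classical
  obtain rfl | ⟨t, ht⟩ := A.eq_empty_or_nonempty
  · simp
  have inj : Set.InjOn (fun x => direction (x - t)) (A.erase t : Set (F × F)) := by
    intro x hx y hy hdir
    obtain ⟨hxt, hxA⟩ := mem_erase.1 hx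
    obtain ⟨hyt, hyA⟩ := mem_erase.1 hy
    by_contra hxy
    exact hA t ht x hxA y hyA hxt.symm hyt.symm hxy (collinear_of_direction_eq hdir)
  have hcard : #(A.erase t) ≤ #(univ : Finset (Option F)) :=
    card_le_card_of_injOn _ (fun _ _ => mem_coe.2 (mem_univ _)) inj
  rw [card_univ, Fintype.card_option] at hcard
  have := card_erase_add_one ht
  omega

/-- The graph joining two points outside `T` when their line meets `T`. Points of `T` are left
isolated so that an arc containing `T` is an independent set. -/
def secantGraph (T : Set (F × F)) : SimpleGraph (F × F) where
  Adj x y := x ≠ y ∧ x ∉ T ∧ y ∉ T ∧ ∃ t ∈ T, Collinear F {t, x, y}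
  symm := ⟨fun x y ⟨hxy, hx, hy, t, ht, htxy⟩ =>
    ⟨hxy.symm, hy, hx, t, ht, Set.pair_comm x y ▸ htxy⟩⟩
  loopless := ⟨fun _ h => h.1 rfl⟩

lemma IsArc.isIndepSet_secantGraph {A T : Set (F × F)} (hA : IsArc F A) (hTA : T ⊆ A) :
    (secantGraph T).IsIndepSet A := by
  rintro x hx y hy hxy ⟨-, hxT, hyT, t, ht, htxy⟩
  exact hA t (hTA ht) x hx y hy (ne_of_mem_of_not_mem ht hxT) (ne_of_mem_of_not_mem ht hyT) hxy htxy

open Classical in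
lemma IsArc.sum_card_collinear_le {T Y : Finset (F × F)} (hT : IsArc F (T : Set (F × F)))
    (hTY : Disjoint T Y) {x : F × F} (hx : x ∈ Y) :
    ∑ t ∈ T, #{y ∈ Y | Collinear F {t, x, y}} ≤ #T + 2 * #{y ∈ Y | (secantGraph ↑T).Adj x y} := by
  have double_count (y : F × F) (hy : y ∈ Y) : #{t ∈ T | Collinear F {t, x, y}} ≤
      (if x = y then #T else 0) + 2 * if (secantGraph ↑T).Adj x y then 1 else 0 := by
    by_cases hxy : x = y
    · rw [if_pos hxy]
      exact (card_filter_le _ _).trans (Nat.le_add_right _ _)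
    by_cases hadj : (secantGraph ↑T).Adj x y
    · simpa only [if_neg hxy, if_pos hadj, zero_add] using hT.card_filter_collinear_le_two hxy
    · rw [filter_eq_empty_iff.2 fun t ht htxy => hadj
        ⟨hxy, disjoint_right.1 hTY hx, disjoint_right.1 hTY hy, t, ht, htxy⟩]
      exact Nat.zero_le _
  calc ∑ t ∈ T, #{y ∈ Y | Collinear F {t, x, y}} = ∑ y ∈ Y, #{t ∈ T | Collinear F {t, x, y}} :=
        sum_card_bipartiteAbove_eq_sum_card_bipartiteBelow fun t y => Collinear F {t, x, y}
    _ ≤ _ := sum_le_sum double_count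
    _ = _ := by rw [sum_add_distrib, sum_ite_eq, if_pos hx, ← mul_sum, card_filter]

open Classical in
lemma IsArc.exists_card_mul_card_le [Fintype F] {T Y : Finset (F × F)}
    (hT : IsArc F (T : Set (F × F))) (hTY : Disjoint T Y) (hY : Y.Nonempty) :
    ∃ x ∈ Y, #T * #Y ≤
      (Fintype.card F + 1) * (#T + 2 * #{y ∈ Y | (secantGraph ↑T).Adj x y}) := by
  refine exists_le_of_sum_le hY ?_
  calc ∑ _x ∈ Y, #T * #Y = ∑ _t ∈ T, #Y ^ 2 := by
        simp only [sum_const, smul_eq_mul]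
        ring
    _ ≤ ∑ t ∈ T, (Fintype.card F + 1) * ∑ x ∈ Y, #{y ∈ Y | Collinear F {t, x, y}} :=
      sum_le_sum fun t _ => sq_card_le_mul_sum_card_collinear Y t
    _ = ∑ x ∈ Y, (Fintype.card F + 1) * ∑ t ∈ T, #{y ∈ Y | Collinear F {t, x, y}} := by
      rw [← mul_sum, sum_comm, mul_sum]
    _ ≤ _ := sum_le_sum fun x hx => Nat.mul_le_mul_left _ (hT.sum_card_collinear_le hTY hx)

open Classical in
lemma IsArc.exists_mul_card_le_card_adj [Fintype F] {T X : Finset (F × F)}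
    (hT : IsArc F (T : Set (F × F))) (hTq : #T ≤ Fintype.card F + 1)
    (hX : 4 * (Fintype.card F + 1) < #X) :
    ∃ v ∈ X, (#T / (4 * (Fintype.card F + 1)) : ℝ) * #X ≤
      #{w ∈ X | (secantGraph ↑T).Adj v w} := by
  set q := Fintype.card F
  have hXT : #X ≤ #(X \ T) + #T := by
    have := le_card_sdiff T X
    omega
  obtain ⟨v, hv, hcount⟩ := hT.exists_card_mul_card_le disjoint_sdiff
    (card_pos.1 (by omega : 0 < #(X \ T)))
  refine ⟨v, sdiff_subset hv, ?_⟩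
  set d := #{w ∈ X \ T | (secantGraph ↑T).Adj v w}
  have hd : d ≤ #{w ∈ X | (secantGraph ↑T).Adj v w} :=
    card_le_card (filter_subset_filter _ sdiff_subset)
  have key : #T * #X ≤ 4 * (q + 1) * d := by
    have : #X + 2 * (q + 1) ≤ 2 * #(X \ T) := by omega
    nlinarith [Nat.mul_le_mul_left (#T) this]
  rw [div_mul_eq_mul_div, div_le_iff₀ (by positivity), mul_comm (#{w ∈ X | _} : ℝ)]
  exact_mod_cast key.trans (Nat.mul_le_mul_left _ hd)

open Classical in
lemma IsArc.card_indepSubsets_secantGraph_le [Fintype F] {T : Finset (F × F)}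
    (hT : IsArc F (T : Set (F × F))) (hTq : #T ≤ Fintype.card F + 1) {s k : ℕ}
    (hs : 8 * ((Fintype.card F : ℝ) + 1) * Real.log (Fintype.card F) ≤ #T * s)
    (hk : k ≤ 2 * (Fintype.card F + 1)) :
    #(indepSubsets (secantGraph (T : Set (F × F))) univ k) ≤
      (Fintype.card F ^ 2 + 1) ^ s * (4 * (Fintype.card F + 1)).choose k := by
  have hdense (X : Finset (F × F)) := hT.exists_mul_card_le_card_adj (X := X) hTq
  have container := card_indepSubsets_le (secantGraph (T : Set (F × F))) hdense univ s k
  have hq : 0 < Fintype.card F := Fintype.card_pos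
  rw [card_univ, Fintype.card_prod, ← sq] at container
  set q := Fintype.card F
  refine container ?_ (by omega)
  have hβ : (#T / (4 * (q + 1)) : ℝ) ≤ 1 := by
    rw [div_le_one (by positivity)]
    exact_mod_cast hTq.trans (by omega)
  have hlog : Real.log ((q : ℝ) ^ 2) ≤ s * (#T / (4 * (q + 1)) : ℝ) := by
    rw [Real.log_pow, ← mul_div_assoc, le_div_iff₀ (by positivity)]
    push_cast
    linarith
  rw [Nat.cast_pow]
  calc (1 - #T / (4 * (q + 1)) : ℝ) ^ s * (q : ℝ) ^ 2 ≤ 1 :=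
        one_sub_pow_mul_le_one hβ (by positivity) hlog
    _ ≤ (4 * (q + 1) : ℕ) := by exact_mod_cast (by omega : 1 ≤ 4 * (q + 1))

end Plane

section Counting

variable {F : Type*} [Field F] [Fintype F]

open Classical in
lemma numArcs_eq_card_filter (k : ℕ) :
    numArcs F k = #{A : Finset (F × F) | #A = k ∧ IsArc F (A : Set (F × F))} := by
  rw [numArcs, Nat.card_eq_fintype_card, Fintype.card_subtype]

lemma numArcs_le_pow (k : ℕ) : numArcs F k ≤ (Fintype.card F ^ 2) ^ k := by
  classical
  calc numArcs F k ≤ #(powersetCard k (univ : Finset (F × F))) := by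
        rw [numArcs_eq_card_filter]
        exact card_le_card fun A hA => mem_powersetCard_univ.2 (mem_filter.1 hA).2.1
    _ = (Fintype.card F ^ 2).choose k := by
      rw [card_powersetCard, card_univ, Fintype.card_prod, sq]
    _ ≤ (Fintype.card F ^ 2) ^ k := Nat.choose_le_pow _ _

lemma numArcs_eq_zero {k : ℕ} (hk : Fintype.card F + 2 < k) : numArcs F k = 0 := by
  classical
  rw [numArcs_eq_card_filter, card_eq_zero, filter_eq_empty_iff]
  rintro A - ⟨rfl, hA⟩
  exact hA.card_le.not_gt hk

open Classical in
lemma numArcs_le_numArcs_mul {r k B : ℕ} (hrk : r ≤ k)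
    (hB : ∀ T : Finset (F × F), #T = r → IsArc F (T : Set (F × F)) →
      #(indepSubsets (secantGraph (T : Set (F × F))) univ k) ≤ B) :
    numArcs F k ≤ numArcs F r * B := by
  rw [numArcs_eq_card_filter, numArcs_eq_card_filter]
  refine le_trans (card_le_card fun A hA => ?_) (card_biUnion_le_card_mul _
    (fun T : Finset (F × F) => indepSubsets (secantGraph (T : Set (F × F))) univ k) B
    fun T hT => hB T (mem_filter.1 hT).2.1 (mem_filter.1 hT).2.2)
  obtain ⟨-, hAk, hArc⟩ := mem_filter.1 hA
  obtain ⟨T, hTA, hTr⟩ := exists_subset_card_eq (hrk.trans_eq hAk.symm)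
  exact mem_biUnion.2 ⟨T, mem_filter.2 ⟨mem_univ T, hTr, hArc.mono_s1 hTA⟩,
    (mem_indepSubsets _).2 ⟨⟨subset_univ A, hAk⟩, hArc.isIndepSet_secantGraph hTA⟩⟩

theorem numArcs_le_pow_mul_choose {k r s : ℕ} (hrk : r ≤ k) (hrq : r ≤ Fintype.card F + 1)
    (hrs : 8 * ((Fintype.card F : ℝ) + 1) * Real.log (Fintype.card F) ≤ r * s)
    (hk : k ≤ 2 * (Fintype.card F + 1)) :
    numArcs F k ≤ (Fintype.card F ^ 2) ^ r * (Fintype.card F ^ 2 + 1) ^ s *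
      (4 * (Fintype.card F + 1)).choose k := by
  classical
  set q := Fintype.card F
  calc numArcs F k ≤ numArcs F r * ((q ^ 2 + 1) ^ s * (4 * (q + 1)).choose k) := by
        refine numArcs_le_numArcs_mul hrk ?_
        rintro T rfl hT
        exact hT.card_indepSubsets_secantGraph_le hrq hrs hk
    _ ≤ (q ^ 2) ^ r * ((q ^ 2 + 1) ^ s * (4 * (q + 1)).choose k) := by
      gcongr
      exact numArcs_le_pow r
    _ = _ := (mul_assoc _ _ _).symm

end Counting

lemma sq_pow_mul_sq_add_one_pow_le_two_pow {q r s k : ℕ} (hq : 2 ≤ q)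
    (h : 3 * ((r : ℝ) + s) * Real.log q ≤ k * Real.log 2) :
    (q ^ 2) ^ r * (q ^ 2 + 1) ^ s ≤ 2 ^ k := by
  have hpow : q ^ (3 * (r + s)) ≤ 2 ^ k := by
    have hlog : Real.log ((q : ℝ) ^ (3 * (r + s))) ≤ Real.log ((2 : ℝ) ^ k) := by
      simpa only [Real.log_pow, Nat.cast_mul, Nat.cast_add, Nat.cast_ofNat] using h
    exact_mod_cast (Real.log_le_log_iff (by positivity) (by positivity)).1 hlog
  calc (q ^ 2) ^ r * (q ^ 2 + 1) ^ s ≤ (q ^ 3) ^ r * (q ^ 3) ^ s := by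
        gcongr
        · omega
        · norm_num
        · nlinarith
    _ = q ^ (3 * (r + s)) := by rw [← pow_add, ← pow_mul]
    _ ≤ 2 ^ k := hpow

/-- `r` is the size of the arc `T` and `s` the number of selected vertices; `r ≈ √q` balances `r`
against `s ≈ (q / r) log q`. -/
lemma exists_fingerprint_sizes {q k : ℕ} (hq : 2 ≤ q)
    (hk : 100 * √(q : ℝ) * Real.log q ^ 2 ≤ k) :
    ∃ r s : ℕ, r ≤ k ∧ r ≤ q + 1 ∧ 8 * ((q : ℝ) + 1) * Real.log q ≤ r * s ∧
      3 * ((r : ℝ) + s) * Real.log q ≤ k * Real.log 2 := by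
  have hq' : (2 : ℝ) ≤ q := by exact_mod_cast hq
  have hL : 1 / 2 ≤ Real.log q :=
    calc (1 / 2 : ℝ) ≤ Real.log 2 := by linarith [Real.log_two_gt_d9]
      _ ≤ Real.log q := Real.log_le_log two_pos hq'
  set L := Real.log q
  have hQQ : √(q : ℝ) * √(q : ℝ) = q := Real.mul_self_sqrt (by positivity)
  have hQ : 1 ≤ √(q : ℝ) := Real.one_le_sqrt.2 (by linarith)
  set Q := √(q : ℝ)
  have hQL : 1 ≤ 2 * (Q * L) := by nlinarith
  have hr : (⌈Q⌉₊ : ℝ) ≤ 4 * (Q * L) := by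
    have := Nat.ceil_lt_add_one (zero_le_one.trans hQ)
    nlinarith
  have hs : (⌈12 * (Q * L)⌉₊ : ℝ) ≤ 14 * (Q * L) := by
    have := Nat.ceil_lt_add_one (by positivity : 0 ≤ 12 * (Q * L))
    linarith
  refine ⟨⌈Q⌉₊, ⌈12 * (Q * L)⌉₊, ?_, ?_, ?_, ?_⟩
  · have : (⌈Q⌉₊ : ℝ) ≤ k := by nlinarith
    exact_mod_cast this
  · refine Nat.ceil_le.2 ?_
    push_cast
    nlinarith
  · calc 8 * ((q : ℝ) + 1) * L ≤ 12 * q * L := by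
          gcongr ?_ * L
          linarith
      _ = Q * (12 * (Q * L)) := by rw [← hQQ]; ring
      _ ≤ _ := by gcongr <;> exact Nat.le_ceil _
  · calc 3 * ((⌈Q⌉₊ : ℝ) + ⌈12 * (Q * L)⌉₊) * L ≤ 3 * (4 * (Q * L) + 14 * (Q * L)) * L := by
          gcongr
      _ = 100 * Q * L ^ 2 * 0.54 := by ring
      _ ≤ k * Real.log 2 := by
        gcongr
        linarith [Real.log_two_gt_d9]

theorem arc_count_large_k_general (F : Type*) [Field F] [Fintype F] (k : ℕ)
    (hk : 100 * √(Fintype.card F : ℝ) * Real.log (Fintype.card F) ^ 2 ≤ k) :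
    numArcs F k ≤ (8 * (Fintype.card F + 1)).choose k := by
  set q := Fintype.card F
  rcases lt_or_ge (q + 2) k with hlarge | hsmall
  · simp [numArcs_eq_zero hlarge]
  have hq2 : 2 ≤ q := Fintype.one_lt_card
  obtain ⟨r, s, hrk, hrq, hrs, hlog⟩ := exists_fingerprint_sizes hq2 hk
  calc numArcs F k ≤ (q ^ 2) ^ r * (q ^ 2 + 1) ^ s * (4 * (q + 1)).choose k :=
        numArcs_le_pow_mul_choose hrk hrq hrs (by omega)
    _ ≤ 2 ^ k * (4 * (q + 1)).choose k := by
      gcongr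
      exact sq_pow_mul_sq_add_one_pow_le_two_pow hq2 hlog
    _ ≤ (2 * (4 * (q + 1))).choose k := pow_mul_choose_le_choose_mul 2 _ k
    _ = (8 * (q + 1)).choose k := by ring_nf

lemma eventually_mul_sqrt_mul_log_sq_le (c : ℝ) {δ : ℝ} (hδ : 0 < δ) :
    ∀ᶠ x : ℝ in Filter.atTop, c * √x * Real.log x ^ 2 ≤ x ^ ((1 : ℝ) / 2 + δ) := by
  have hlog := ((isLittleO_log_rpow_rpow_atTop 2 hδ).const_mul_left c).bound one_pos
  filter_upwards [hlog, Filter.eventually_gt_atTop 0] with x hx hx0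
  rw [one_mul, Real.norm_of_nonneg (Real.rpow_nonneg hx0.le δ), Real.rpow_two] at hx
  calc c * √x * Real.log x ^ 2 = √x * (c * Real.log x ^ 2) := by ring
    _ ≤ √x * x ^ δ := by
      gcongr
      exact (Real.le_norm_self _).trans hx
    _ = x ^ ((1 : ℝ) / 2 + δ) := by rw [Real.rpow_add hx0, Real.sqrt_eq_rpow]

lemma eventually_mul_add_one_le_rpow_div (c : ℝ) {ε : ℝ} (hε : 0 < ε) :
    ∀ᶠ x : ℝ in Filter.atTop, ∀ y : ℝ, 0 < y → y ≤ x →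
      c * (x + 1) ≤ 2 * x ^ ((2 : ℝ) + ε) / y := by
  filter_upwards [(tendsto_rpow_atTop hε).eventually_ge_atTop (max c 0),
    Filter.eventually_ge_atTop 1] with x hx hx1 y hy hyx
  have hx0 : 0 < x := zero_lt_one.trans_le hx1
  rw [le_div_iff₀ hy, Real.rpow_add hx0, Real.rpow_two]
  calc c * (x + 1) * y ≤ max c 0 * (2 * x) * x := by
        gcongr
        · exact le_max_left c 0
        · linarith
    _ = 2 * (x ^ 2 * max c 0) := by ring
    _ ≤ 2 * (x ^ 2 * x ^ ε) := by gcongr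

theorem arc_count_large_k :
    ∀ δ : ℝ, 0 < δ → ∃ q₀ : ℕ, ∀ (F : Type) [Field F] [Fintype F],
      q₀ ≤ Fintype.card F → ∀ k : ℕ,
      (Fintype.card F : ℝ) ^ ((1 : ℝ) / 2 + δ) ≤ (k : ℝ) → k ≤ Fintype.card F →
      numArcs F k ≤
        Nat.choose ⌈2 * (Fintype.card F : ℝ) ^ ((2 : ℝ) + 3 * δ / 2) / (k : ℝ)⌉₊ k := by
  intro δ hδ
  obtain ⟨q₀, hq₀⟩ := Filter.eventually_atTop.1 <| tendsto_natCast_atTop_atTop.eventually <|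
    (eventually_mul_sqrt_mul_log_sq_le 100 hδ).and
      (eventually_mul_add_one_le_rpow_div 8 (by positivity : 0 < 3 * δ / 2))
  refine ⟨q₀, fun F _ _ hq k hk hkq => ?_⟩
  obtain ⟨hsize, hcontainer⟩ := hq₀ _ hq
  have hk0 : (0 : ℝ) < k :=
    (Real.rpow_pos_of_pos (by exact_mod_cast Fintype.card_pos) _).trans_le hk
  refine (arc_count_large_k_general F k (hsize.trans hk)).trans (Nat.choose_le_choose k ?_)
  exact_mod_cast (hcontainer k hk0 (by exact_mod_cast hkq)).trans (Nat.le_ceil _)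
end
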